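/- Let p be a prime with p ≠ 3 and r a natural number. If the elementary abelian group (Z_p)^r is not a DCI group, then (Z_p)^{r+2} is not a CI group. -/

import Mathlib

/-!
Write `K = ZMod p` and `V = K^r`. For `p = 2` every subset of `V` is symmetric, so `V` is not a CI
group, and the failure of the CI property passes from `V` to `V × K`
(`not_isCIGroup_prod_of_not_isCIGroup`): an automorphism of `V × K` that carries `S × {0}` to
`S' × {0}` restricts to a linear isomorphism between the spans of `S` and `S'`, which extends to
an automorphism of `V`.

For `p ≥ 5`, one extra coordinate is already enough to remove the orientation of the arcs
(`not_isCIGroup_prod_of_not_isDCIGroup`). Given `S ⊆ V` with `0 ∉ S`, let `T(S) ⊆ V × K` be the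
symmetric set whose fibre over the last coordinate is `V` over `0`, `S` over `1`, `-S` over `-1`,
`{0}` over `±2`, and empty elsewhere; these five positions are distinct because `p ≥ 5`.
An isomorphism `φ` of the digraphs of `S` and `S'` gives the isomorphism `φ × id` of the graphs
of `T(S)` and `T(S')`.
Conversely, let `S` be nonempty and `α` an automorphism with `α(T(S)) = T(S')`.

* `α` preserves `V × 0`: otherwise some multiple of an element of `α(V × 0) ⊆ T(S')` is of the
  form `(v, 2)`, so `v = 0`, and then `(0, 1) ∈ T(S')`, i.e. `0 ∈ S'`.
* Hence `α (v, i) = (γ v + i u, i b)` with `γ` an automorphism of `V` and `b ≠ 0`. The fibre of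
  `T(S)` over `1` is `S`, and it is mapped onto the fibre of `T(S')` over `b`, so `b` is `±1` or
  `±2`. If `b = ±1`, the element `(0, 2)` shows `2u = 0`, so `γ(S) = ±S'`, and `γ` or `-γ` carries
  `S` to `S'`.
* If `b = ±2`, then `S` is a singleton, hence so is `S'`, and any two nonzero vectors are related
  by an automorphism.

The dimension `r + 2` is then reached by `not_isCIGroup_prod_of_not_isCIGroup`.
-/

/-- Edge relation of the Cayley digraph `Cay⃗(G;S)` of the additive group `G` with
connection set `S`: there is a directed edge from `g` to `h` iff `h ∈ S + g`,
i.e. iff `h - g ∈ S`. -/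
def cayleyRel {G : Type*} [AddGroup G] (S : Set G) : G → G → Prop :=
  fun g h => h - g ∈ S

/-- Isomorphism of digraphs (or of undirected graphs, viewed via their symmetric
edge relations): a bijection of the vertex sets such that there is an edge from `x`
to `y` iff there is one from the image of `x` to the image of `y`. -/
def DigraphIso {V W : Type*} (r : V → V → Prop) (s : W → W → Prop) : Prop :=
  ∃ e : V ≃ W, ∀ x y, r x y ↔ s (e x) (e y)

/-- `Cay⃗(G;S)` is a DCI digraph: for every `S' ⊆ G` with `Cay⃗(G;S) ≅ Cay⃗(G;S')`
there is a group automorphism of `G` carrying `S` to `S'`. -/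
def IsDCIDigraph {G : Type*} [AddGroup G] (S : Set G) : Prop :=
  ∀ S' : Set G, DigraphIso (cayleyRel S) (cayleyRel S') → ∃ α : G ≃+ G, α '' S = S'

/-- `G` is a DCI group: every Cayley digraph of `G` is a DCI digraph. -/
def IsDCIGroup (G : Type*) [AddGroup G] : Prop :=
  ∀ S : Set G, IsDCIDigraph S

/-- For symmetric `S` (`S = -S`), `Cay(G;S)` is a CI graph: for every symmetric
`S' ⊆ G` with `Cay(G;S) ≅ Cay(G;S')` there is a group automorphism of `G`
carrying `S` to `S'`. -/
def IsCIGraph {G : Type*} [AddGroup G] (S : Set G) : Prop :=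
  ∀ S' : Set G, S' = -S' → DigraphIso (cayleyRel S) (cayleyRel S') →
    ∃ α : G ≃+ G, α '' S = S'

/-- `G` is a CI group: every Cayley graph of `G` (i.e. for symmetric connection
sets) is a CI graph. -/
def IsCIGroup (G : Type*) [AddGroup G] : Prop :=
  ∀ S : Set G, S = -S → IsCIGraph S

/-! ### Invariance under isomorphism and extension of linear maps -/

/-- Being a CI group is invariant under isomorphism. -/
lemma IsCIGroup.of_addEquiv {G H : Type*} [AddGroup G] [AddGroup H] (e : G ≃+ H)
    (h : IsCIGroup G) : IsCIGroup H := by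
  intro S hS S' hS' ⟨φ, hφ⟩
  have hneg : ∀ A : Set H, A = -A → e ⁻¹' A = -(e ⁻¹' A) := by
    intro A hA
    ext x
    have : e x ∈ A ↔ e x ∈ -A := by rw [← hA]
    simpa using this
  obtain ⟨α, hα⟩ := h (e ⁻¹' S) (hneg S hS) (e ⁻¹' S') (hneg S' hS')
    ⟨(e.toEquiv.trans φ).trans e.symm.toEquiv, by
      intro x y
      simpa [cayleyRel] using hφ (e x) (e y)⟩
  refine ⟨(e.symm.trans α).trans e, ?_⟩
  have h2 : S' = e '' (e ⁻¹' S') := (Set.image_preimage_eq S' e.surjective).symm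
  rw [h2, ← hα]
  ext y
  simp only [Set.mem_image, Set.mem_preimage, AddEquiv.trans_apply]
  constructor
  · rintro ⟨x, hx, rfl⟩
    exact ⟨α (e.symm x), ⟨e.symm x, by simpa using hx, rfl⟩, rfl⟩
  · rintro ⟨_, ⟨x, hx, rfl⟩, rfl⟩
    exact ⟨e x, hx, by simp⟩

section

variable {K V : Type*} [Field K] [AddCommGroup V] [Module K V]

/-- The image of a set under a linear map injective on its span is also its image under some
linear automorphism. -/
lemma exists_linearEquiv_image_eq [FiniteDimensional K V] (f : V →ₗ[K] V) (S : Set V)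
    (hf : ∀ x ∈ Submodule.span K S, f x = 0 → x = 0) : ∃ g : V ≃ₗ[K] V, g '' S = f '' S := by
  have hinj : Function.Injective (f.domRestrict (Submodule.span K S)) := by
    rw [injective_iff_map_eq_zero]
    intro x hx
    exact Subtype.ext (hf x.1 x.2 hx)
  obtain ⟨g, hg⟩ := Submodule.exists_linearEquiv_restrict_eq
    (LinearEquiv.ofInjective (f.domRestrict (Submodule.span K S)) hinj)
  refine ⟨g, Set.image_congr fun x hx => ?_⟩
  rw [← hg ⟨x, Submodule.subset_span hx⟩]
  rfl

/-- Linear automorphisms act transitively on nonzero vectors. -/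
lemma exists_linearEquiv_apply_eq {s s' : V} (hs : s ≠ 0) (hs' : s' ≠ 0) :
    ∃ g : V ≃ₗ[K] V, g s = s' := by
  obtain ⟨g, hg⟩ := Submodule.exists_linearEquiv_restrict_eq
    ((LinearEquiv.toSpanNonzeroSingleton K V s hs).symm.trans
      (LinearEquiv.toSpanNonzeroSingleton K V s' hs'))
  refine ⟨g, ?_⟩
  rw [← hg ⟨s, Submodule.mem_span_singleton_self s⟩]
  have : (LinearEquiv.toSpanNonzeroSingleton K V s hs).symm
      ⟨s, Submodule.mem_span_singleton_self s⟩ = 1 := by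
    rw [LinearEquiv.symm_apply_eq]
    simp
  simp [this]

end

/-! ### The symmetric encoding of a connection set -/

section

variable {p : ℕ} [Fact p.Prime] {V : Type*} [AddCommGroup V]

/-- The symmetric subset of `V × ZMod p` encoding `S ⊆ V`: its fibre over the last coordinate is
`V` over `0`, `S` over `1`, `-S` over `-1`, `{0}` over `±2`, and empty over all other elements. -/
def symmEncoding (p : ℕ) {V : Type*} [AddCommGroup V] (S : Set V) : Set (V × ZMod p) :=
  {x | x.2 = 0 ∨ (x.2 = 1 ∧ x.1 ∈ S) ∨ (x.2 = -1 ∧ -x.1 ∈ S) ∨ ((x.2 = 2 ∨ x.2 = -2) ∧ x.1 = 0)}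

lemma neg_mem_symmEncoding {S : Set V} {x : V × ZMod p} (hx : x ∈ symmEncoding p S) :
    -x ∈ symmEncoding p S := by
  obtain ⟨v, i⟩ := x
  simp only [symmEncoding, Set.mem_ofPred_eq, Prod.neg_mk] at hx ⊢
  rcases hx with rfl | ⟨rfl, h⟩ | ⟨rfl, h⟩ | ⟨rfl | rfl, h⟩ <;> simp [*]

lemma symmEncoding_eq_neg (S : Set V) : symmEncoding p S = -symmEncoding p S := by
  ext x
  exact ⟨neg_mem_symmEncoding, fun h => by simpa using neg_mem_symmEncoding h⟩

lemma mk_zero_mem_symmEncoding (S : Set V) (v : V) : (v, 0) ∈ symmEncoding p S := Or.inl rfl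

lemma mk_one_mem_symmEncoding (hp2 : (2 : ZMod p) ≠ 0) (hp3 : (3 : ZMod p) ≠ 0) (S : Set V)
    (v : V) : (v, 1) ∈ symmEncoding p S ↔ v ∈ S := by
  have h1 : (1 : ZMod p) ≠ -1 := by grind
  have h2 : (1 : ZMod p) ≠ 2 := by grind
  have h3 : (1 : ZMod p) ≠ -2 := by grind
  simp [symmEncoding, h1, h2, h3]

lemma mk_two_mem_symmEncoding (hp2 : (2 : ZMod p) ≠ 0) (hp3 : (3 : ZMod p) ≠ 0) (S : Set V)
    (v : V) : (v, 2) ∈ symmEncoding p S ↔ v = 0 := by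
  have h1 : (2 : ZMod p) ≠ -1 := by grind
  have h2 : (2 : ZMod p) ≠ 1 := by grind
  simp [symmEncoding, h1, h2, hp2]

lemma mk_neg_one_mem_symmEncoding (hp2 : (2 : ZMod p) ≠ 0) (hp3 : (3 : ZMod p) ≠ 0) (S : Set V)
    (v : V) : (v, -1) ∈ symmEncoding p S ↔ -v ∈ S := by
  rw [symmEncoding_eq_neg, Set.mem_neg, Prod.neg_mk, neg_neg, mk_one_mem_symmEncoding hp2 hp3]

lemma mk_neg_two_mem_symmEncoding (hp2 : (2 : ZMod p) ≠ 0) (hp3 : (3 : ZMod p) ≠ 0) (S : Set V)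
    (v : V) : (v, -2) ∈ symmEncoding p S ↔ v = 0 := by
  rw [symmEncoding_eq_neg, Set.mem_neg, Prod.neg_mk, neg_neg, mk_two_mem_symmEncoding hp2 hp3,
    neg_eq_zero]

/-- An isomorphism of Cayley digraphs of `V` acts on the first coordinate as an isomorphism of the
Cayley graphs of the symmetric encodings. -/
lemma digraphIso_symmEncoding {S S' : Set V} (h : DigraphIso (cayleyRel S) (cayleyRel S')) :
    DigraphIso (cayleyRel (symmEncoding p S)) (cayleyRel (symmEncoding p S')) := by
  obtain ⟨φ, hφ⟩ := h
  refine ⟨φ.prodCongr (Equiv.refl _), fun x y => ?_⟩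
  have h1 := hφ x.1 y.1
  have h2 := hφ y.1 x.1
  simp only [cayleyRel] at h1 h2
  simp [cayleyRel, symmEncoding, h1, h2, sub_eq_zero]

end

/-! ### Passing from `V` to `V × ZMod p` -/

section

variable {p : ℕ} [Fact p.Prime] {V : Type*} [AddCommGroup V] [Module (ZMod p) V]

/-- An additive automorphism of a `ZMod p`-module, as a linear map. -/
def linOf {W : Type*} [AddCommGroup W] [Module (ZMod p) W] (α : W ≃+ W) : W →ₗ[ZMod p] W :=
  α.toAddMonoidHom.toZModLinearMap p

lemma linOf_apply {W : Type*} [AddCommGroup W] [Module (ZMod p) W] (α : W ≃+ W) (x : W) :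
    linOf (p := p) α x = α x := rfl

lemma not_isCIGroup_prod_of_not_isCIGroup [FiniteDimensional (ZMod p) V] (h : ¬ IsCIGroup V) :
    ¬ IsCIGroup (V × ZMod p) := by
  refine fun hci => h fun S hS S' hS' ⟨φ, hφ⟩ => ?_
  have hneg : ∀ A : Set V, A = -A →
      {x : V × ZMod p | x.1 ∈ A ∧ x.2 = 0} = -{x : V × ZMod p | x.1 ∈ A ∧ x.2 = 0} := by
    intro A hA
    ext x
    have : x.1 ∈ A ↔ x.1 ∈ -A := by rw [← hA]
    simpa using fun _ => this
  obtain ⟨α, hα⟩ := hci {x | x.1 ∈ S ∧ x.2 = 0} (hneg S hS) {x | x.1 ∈ S' ∧ x.2 = 0}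
    (hneg S' hS') ⟨φ.prodCongr (Equiv.refl _), fun x y => by
      have := hφ x.1 y.1
      simp only [cayleyRel] at this
      simp [cayleyRel, this]⟩
  let f : V →ₗ[ZMod p] V := LinearMap.fst _ _ _ ∘ₗ linOf α ∘ₗ LinearMap.inl _ _ _
  let b : V →ₗ[ZMod p] ZMod p := LinearMap.snd _ _ _ ∘ₗ linOf α ∘ₗ LinearMap.inl _ _ _
  have hfb : ∀ x, α (x, 0) = (f x, b x) := fun x => rfl
  have hmem : ∀ x ∈ S, f x ∈ S' ∧ b x = 0 := by
    intro x hx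
    have : α (x, 0) ∈ {x : V × ZMod p | x.1 ∈ S' ∧ x.2 = 0} := hα ▸ ⟨(x, 0), ⟨hx, rfl⟩, rfl⟩
    exact this
  have hspan : Submodule.span (ZMod p) S ≤ LinearMap.ker b :=
    Submodule.span_le.2 fun x hx => (hmem x hx).2
  obtain ⟨g, hg⟩ := exists_linearEquiv_image_eq f S (by
    intro x hx h0
    have h1 : b x = 0 := hspan hx
    have h2 : α (x, 0) = 0 := by rw [hfb, h0, h1]; rfl
    simpa using h2)
  refine ⟨g.toAddEquiv, hg.trans (Set.Subset.antisymm ?_ ?_)⟩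
  · rintro _ ⟨x, hx, rfl⟩
    exact (hmem x hx).1
  · intro y hy
    have : (y, (0 : ZMod p)) ∈ α '' {x | x.1 ∈ S ∧ x.2 = 0} := hα ▸ ⟨hy, rfl⟩
    obtain ⟨⟨x, i⟩, ⟨hx, hi⟩, hxy⟩ := this
    obtain rfl : i = 0 := hi
    exact ⟨x, hx, congrArg Prod.fst hxy⟩

/-- The key step: if `0` lies in neither of `S` and `S'`, an automorphism of `V × ZMod p` between
their symmetric encodings yields an automorphism of `V` between `S` and `S'`. -/
lemma exists_addEquiv_of_symmEncoding [FiniteDimensional (ZMod p) V]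
    (hp2 : (2 : ZMod p) ≠ 0) (hp3 : (3 : ZMod p) ≠ 0) {S S' : Set V} (h0 : 0 ∉ S) (h0' : 0 ∉ S')
    (hiso : DigraphIso (cayleyRel S) (cayleyRel S')) (α : V × ZMod p ≃+ V × ZMod p)
    (hα : α '' symmEncoding p S = symmEncoding p S') : ∃ γ : V ≃+ V, γ '' S = S' := by
  obtain ⟨φ, hφ⟩ := hiso
  -- Translating, the digraph isomorphism may be assumed to fix `0`; then it maps `S` onto `S'`.
  obtain ⟨ψ, hψ⟩ : ∃ ψ : V ≃ V, S' = ψ '' S := by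
    refine ⟨φ.trans (Equiv.subRight (φ 0)), ?_⟩
    rw [Equiv.image_eq_preimage_symm]
    ext x
    have := hφ 0 (φ.symm (x + φ 0))
    simp only [cayleyRel] at this
    simpa using this.symm
  have hmem : ∀ x, α x ∈ symmEncoding p S' ↔ x ∈ symmEncoding p S := by
    intro x
    rw [← hα, α.injective.mem_set_image]
  let f : V →ₗ[ZMod p] V := LinearMap.fst _ _ _ ∘ₗ linOf α ∘ₗ LinearMap.inl _ _ _
  let b : V →ₗ[ZMod p] ZMod p := LinearMap.snd _ _ _ ∘ₗ linOf α ∘ₗ LinearMap.inl _ _ _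
  have hfb : ∀ x, α (x, 0) = (f x, b x) := fun x => rfl
  have hb : ∀ v, b v = 0 := by
    intro v
    by_contra hv
    have h2 : α ((2 / b v) • v, 0) = ((2 / b v) • f v, 2) := by
      rw [hfb, map_smul, map_smul, smul_eq_mul, div_mul_cancel₀ _ hv]
    have h1 : α ((1 / b v) • v, 0) = ((1 / b v) • f v, 1) := by
      rw [hfb, map_smul, map_smul, smul_eq_mul, div_mul_cancel₀ _ hv]
    have h2' := (hmem _).2 (mk_zero_mem_symmEncoding S ((2 / b v) • v))
    have h1' := (hmem _).2 (mk_zero_mem_symmEncoding S ((1 / b v) • v))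
    rw [h2, mk_two_mem_symmEncoding hp2 hp3, smul_eq_zero_iff_right (div_ne_zero hp2 hv)] at h2'
    rw [h1, mk_one_mem_symmEncoding hp2 hp3, h2', smul_zero] at h1'
    exact h0' h1'
  obtain ⟨u, c, huc⟩ : ∃ u c, α (0, 1) = (u, c) := ⟨_, _, rfl⟩
  have hformula : ∀ v i, α (v, i) = (f v + i • u, i * c) := by
    intro v i
    have h1 : (v, i) = (v, (0 : ZMod p)) + i • ((0 : V), (1 : ZMod p)) := by simp
    rw [h1, map_add, ZMod.map_smul α, huc, hfb, hb]
    simp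
  have hc : c ≠ 0 := by
    rintro rfl
    obtain ⟨⟨v, i⟩, hvi⟩ := α.surjective (0, 1)
    rw [hformula] at hvi
    simpa using congrArg Prod.snd hvi
  have hf : Function.Injective f := by
    rw [injective_iff_map_eq_zero]
    intro v hv
    have h1 : α (v, 0) = 0 := by rw [hfb, hv, hb]; rfl
    simpa using h1
  let g : V ≃ₗ[ZMod p] V := LinearEquiv.ofInjectiveEndo f hf
  have hg : ∀ v, g v = f v := fun v => rfl
  have hone : ∀ v, (f v + u, c) ∈ symmEncoding p S' ↔ v ∈ S := by
    intro v
    rw [← mk_one_mem_symmEncoding hp2 hp3 S v, ← hmem, hformula, one_smul, one_mul]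
  have htwo : ((2 : ZMod p) • u, 2 * c) ∈ symmEncoding p S' := by
    have := (hmem (0, 2)).2 ((mk_two_mem_symmEncoding hp2 hp3 S 0).2 rfl)
    rwa [hformula, map_zero, zero_add] at this
  rcases S.eq_empty_or_nonempty with rfl | ⟨s, hs⟩
  · exact ⟨AddEquiv.refl V, by simp [hψ]⟩
  -- The remaining position of the fibre, `c = ±2`, forces `S` to be a singleton.
  have hsingle : (∀ v, v ∈ S → f v + u = 0) → ∃ γ : V ≃+ V, γ '' S = S' := by
    intro hv
    have hS : S = {s} := by
      refine Set.eq_singleton_iff_unique_mem.2 ⟨hs, fun v hvS => hf ?_⟩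
      exact add_right_cancel ((hv v hvS).trans (hv s hs).symm)
    rw [hS, Set.image_singleton] at hψ
    obtain ⟨γ, hγ⟩ := exists_linearEquiv_apply_eq (K := ZMod p) (s := s) (s' := ψ s)
      (fun h => h0 (h ▸ hs)) (fun h => h0' (by rw [hψ, h]; rfl))
    exact ⟨γ.toAddEquiv, by rw [hS, hψ, Set.image_singleton]; exact congrArg _ hγ⟩
  have hequiv : ∀ γ : V ≃ₗ[ZMod p] V, (∀ v, γ v ∈ S' ↔ v ∈ S) → ∃ γ : V ≃+ V, γ '' S = S' := by
    intro γ hγ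
    refine ⟨γ.toAddEquiv, ?_⟩
    have : S = γ ⁻¹' S' := Set.ext fun v => (hγ v).symm
    rw [this]
    exact Set.image_preimage_eq S' γ.surjective
  rcases (hone s).2 hs with h | ⟨h, -⟩ | ⟨h, -⟩ | ⟨h | h, -⟩
  · exact absurd h hc
  · obtain rfl : c = 1 := h
    rw [mul_one, mk_two_mem_symmEncoding hp2 hp3, smul_eq_zero_iff_right hp2] at htwo
    refine hequiv g fun v => ?_
    rw [← hone, htwo, add_zero, mk_one_mem_symmEncoding hp2 hp3, hg]
  · obtain rfl : c = -1 := h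
    rw [mul_neg_one, mk_neg_two_mem_symmEncoding hp2 hp3, smul_eq_zero_iff_right hp2] at htwo
    refine hequiv (g.trans (LinearEquiv.neg _)) fun v => ?_
    rw [← hone, htwo, add_zero, mk_neg_one_mem_symmEncoding hp2 hp3, LinearEquiv.trans_apply,
      LinearEquiv.neg_apply, hg]
  · obtain rfl : c = 2 := h
    exact hsingle fun v hv => (mk_two_mem_symmEncoding hp2 hp3 _ _).1 ((hone v).2 hv)
  · obtain rfl : c = -2 := h
    exact hsingle fun v hv => (mk_neg_two_mem_symmEncoding hp2 hp3 _ _).1 ((hone v).2 hv)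

/-- Failure of the DCI property for `V` gives failure of the CI property one dimension higher, in
characteristic other than `2` and `3`. -/
lemma not_isCIGroup_prod_of_not_isDCIGroup [FiniteDimensional (ZMod p) V]
    (hp2 : (2 : ZMod p) ≠ 0) (hp3 : (3 : ZMod p) ≠ 0) (h : ¬ IsDCIGroup V) :
    ¬ IsCIGroup (V × ZMod p) := by
  refine fun hci => h fun S S' hiso => ?_
  -- `0` lies in both or neither of `S` and `S'` (loops), so it may be removed from both.
  have hzero : (0 : V) ∈ S ↔ (0 : V) ∈ S' := by
    obtain ⟨φ, hφ⟩ := hiso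
    simpa [cayleyRel] using hφ 0 0
  have hiso' : DigraphIso (cayleyRel (S \ {0})) (cayleyRel (S' \ {0})) := by
    obtain ⟨φ, hφ⟩ := hiso
    refine ⟨φ, fun x y => ?_⟩
    have := hφ x y
    simp only [cayleyRel] at this
    simp [cayleyRel, this, sub_eq_zero]
  obtain ⟨α, hα⟩ := hci _ (symmEncoding_eq_neg _) _ (symmEncoding_eq_neg _)
    (digraphIso_symmEncoding (p := p) hiso')
  obtain ⟨γ, hγ⟩ := exists_addEquiv_of_symmEncoding hp2 hp3 (by simp) (by simp) hiso' α hα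
  refine ⟨γ, ?_⟩
  have hmem : ∀ x, γ x ∈ S' \ {0} ↔ x ∈ S \ {0} := fun x => by
    rw [← hγ, γ.injective.mem_set_image]
  have hS : S = γ ⁻¹' S' := by
    ext x
    by_cases hx : x = 0
    · simpa [hx] using hzero
    · simpa [hx] using (hmem x).symm
  rw [hS]
  exact Set.image_preimage_eq S' γ.surjective

end

/-- If `p ≠ 3` is prime and `(ℤ_p)^r` is not a DCI group, then `(ℤ_p)^(r+2)` is not
a CI group. -/
theorem nonDCI_implies_nonCI_rplus2_pne3 (p : ℕ) (hp : p.Prime) (hp3 : p ≠ 3) (r : ℕ)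
    (h : ¬ IsDCIGroup (Fin r → ZMod p)) :
    ¬ IsCIGroup (Fin (r + 2) → ZMod p) := by
  have : Fact p.Prime := ⟨hp⟩
  have e : (Fin (r + 2) → ZMod p) ≃ₗ[ZMod p] ((Fin r → ZMod p) × ZMod p) × ZMod p :=
    LinearEquiv.ofFinrankEq _ _ (by simp)
  suffices h1 : ¬ IsCIGroup ((Fin r → ZMod p) × ZMod p) from
    fun hci => not_isCIGroup_prod_of_not_isCIGroup h1 (hci.of_addEquiv e.toAddEquiv)
  by_cases hp2 : p = 2
  · subst hp2
    have hneg : ∀ A : Set (Fin r → ZMod 2), A = -A := by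
      intro A
      ext x
      have : -x = x := funext fun i => ZMod.neg_eq_self_mod_two (x i)
      rw [Set.mem_neg, this]
    exact not_isCIGroup_prod_of_not_isCIGroup fun hci =>
      h fun S S' hiso => hci S (hneg S) S' (hneg S') hiso
  · have hne : ∀ q : ℕ, q.Prime → p ≠ q → (q : ZMod p) ≠ 0 := fun q hq hpq h0 =>
      hpq ((Nat.prime_dvd_prime_iff_eq hp hq).1 ((ZMod.natCast_eq_zero_iff q p).1 h0))
    exact not_isCIGroup_prod_of_not_isDCIGroup
      (by exact_mod_cast hne 2 Nat.prime_two hp2) (by exact_mod_cast hne 3 Nat.prime_three hp3) h
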